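/- Let k ≥ 2 be even, let p ≥ 2, and let T be a tree on n = p·(k/2 + 1) vertices of diameter at most k + 2. Then mdi_k(T) ≥ f_k(n), with equality if and only if T is isomorphic to S'_{p,k/2+1}. -/

import Mathlib

/-- `J` is a distance-`k` independent set in `G`: any two distinct vertices of `J`
are at graph distance at least `k + 1`. -/
def DkIndep {V : Type*} (G : SimpleGraph V) (k : ℕ) (J : Set V) : Prop :=
  ∀ ⦃u⦄, u ∈ J → ∀ ⦃v⦄, v ∈ J → u ≠ v → k + 1 ≤ G.dist u v

/-- `J` is a maximal distance-`k` independent set (`k`-MDIS) of `G`. -/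
def MaxDkIndep {V : Type*} (G : SimpleGraph V) (k : ℕ) (J : Set V) : Prop :=
  DkIndep G k J ∧ ∀ J', DkIndep G k J' → J ⊆ J' → J' = J

/-- `mdi G k` is the number of maximal distance-`k` independent sets of `G`. -/
noncomputable def mdi {V : Type*} (G : SimpleGraph V) (k : ℕ) : ℕ :=
  {J : Set V | MaxDkIndep G k J}.ncard

/-- `f_k(n)` from the paper. -/
def fk (k n : ℕ) : ℕ :=
  if n ≤ k + 1 then n else n - (n - k % 2) / (k / 2 + 1) + 1

/-- closed ball `N_k[x]`. -/
def ball {V : Type*} (G : SimpleGraph V) (k : ℕ) (x : V) : Set V :=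
  {v | G.dist x v ≤ k}

/-- a leaf is a vertex of degree 1. -/
def IsLeaf {V : Type*} (G : SimpleGraph V) (v : V) : Prop :=
  (G.neighborSet v).ncard = 1

/-- eccentricity of a vertex. -/
noncomputable def ecc {V : Type*} [Fintype V] (G : SimpleGraph V) (v : V) : ℕ :=
  Finset.univ.sup (G.dist v)

/-- diameter of a finite graph. -/
noncomputable def gdiam {V : Type*} [Fintype V] (G : SimpleGraph V) : ℕ :=
  Finset.univ.sup (ecc G)

/-- a central vertex is one of minimum eccentricity. -/
def IsCentral {V : Type*} [Fintype V] (G : SimpleGraph V) (v : V) : Prop :=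
  ∀ u, ecc G v ≤ ecc G u

/-- a `k`-twin: some other vertex has the same closed `k`-ball. -/
def KTwin {V : Type*} (G : SimpleGraph V) (k : ℕ) (u : V) : Prop :=
  ∃ v, v ≠ u ∧ ball G k u = ball G k v

/-- a diametral leaf: a leaf whose eccentricity equals the diameter. -/
def IsDiametralLeaf {V : Type*} [Fintype V] (G : SimpleGraph V) (u : V) : Prop :=
  IsLeaf G u ∧ ecc G u = gdiam G

/-- a `k`-special pair. -/
def KSpecial {V : Type*} [Fintype V] (G : SimpleGraph V) (k : ℕ) (x y : V) : Prop :=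
  IsDiametralLeaf G x ∧ IsDiametralLeaf G y ∧ KTwin G k x ∧ KTwin G k y ∧
    ball G k x ≠ ball G k y

/-- `mdi*_k(G, ℓ)`. -/
noncomputable def mdiStar {V : Type*} (G : SimpleGraph V) (k : ℕ) (ℓ : V) : ℕ :=
  {J : Set V | MaxDkIndep G k J ∧ ℓ ∈ J ∧ ∃ w ∉ J, ball G k w ∩ J = {ℓ}}.ncard

/-- The spider tree `S_{p,m}`: a center (`none`) together with `p` legs of `m` vertices. -/
def spider (p m : ℕ) : SimpleGraph (Option (Fin p × Fin m)) :=
  SimpleGraph.fromRel fun a b =>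
    match a, b with
    | none, some (_, j) => (j : ℕ) = 0
    | some (i, j), some (i', j') => i = i' ∧ (j : ℕ) + 1 = (j' : ℕ)
    | _, _ => False

/-- `S'_{p,m}`: the spider `S_{p,m}` with one leaf at distance `m` from the center removed. -/
def spider' (p m : ℕ) (hp : 0 < p) (hm : 0 < m) :=
  (spider p m).induce
    {v | v ≠ some (⟨0, hp⟩, ⟨m - 1, Nat.sub_lt hm Nat.one_pos⟩)}

/-- The double spider `B_{p₁,p₂,s}`: two adjacent centers (`Sum.inl false`, `Sum.inl true`),
with `p₁` legs of `s` vertices on the first and `p₂` legs of `s` vertices on the second. -/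
def btree (p₁ p₂ s : ℕ) : SimpleGraph (Bool ⊕ ((Fin p₁ ⊕ Fin p₂) × Fin s)) :=
  SimpleGraph.fromRel fun a b =>
    match a, b with
    | Sum.inl x, Sum.inl y => x ≠ y
    | Sum.inl false, Sum.inr (Sum.inl _, j) => (j : ℕ) = 0
    | Sum.inl true, Sum.inr (Sum.inr _, j) => (j : ℕ) = 0
    | Sum.inr (c, j), Sum.inr (c', j') => c = c' ∧ (j : ℕ) + 1 = (j' : ℕ)
    | _, _ => False

/-- `G` contains a subgraph isomorphic to `H`. -/
def ContainsSub {V W : Type*} (G : SimpleGraph V) (H : SimpleGraph W) : Prop :=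
  ∃ f : W → V, Function.Injective f ∧ ∀ a b, H.Adj a b → G.Adj (f a) (f b)

/-- A pendant path on `s` vertices `P 0, …, P (s-1)` attached to `w`:
`P 0` is a leaf, consecutive vertices are adjacent, interior vertices have degree 2,
and `P (s-1)` is adjacent to `w`. -/
def IsPendantPath {V : Type*} (T : SimpleGraph V) (s : ℕ) (P : ℕ → V) (w : V) : Prop :=
  Set.InjOn P (Set.Iio s) ∧ (∀ i < s, P i ≠ w) ∧ IsLeaf T (P 0) ∧
    (∀ i, i + 1 < s → T.Adj (P i) (P (i + 1))) ∧
    (∀ i, 0 < i → i < s → (T.neighborSet (P i)).ncard = 2) ∧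
    T.Adj (P (s - 1)) w

/-- Isomorphism of simple graphs on `Fin n` as a setoid. -/
def graphSetoid (n : ℕ) : Setoid (SimpleGraph (Fin n)) where
  r G H := Nonempty (G ≃g H)
  iseqv := ⟨fun _ => ⟨SimpleGraph.Iso.refl⟩, fun ⟨e⟩ => ⟨e.symm⟩, fun ⟨e⟩ ⟨f⟩ => ⟨e.trans f⟩⟩

/-- The number of isomorphism classes of graphs in a set of graphs on `Fin n`. -/
noncomputable def numIsoClasses {n : ℕ} (S : Set (SimpleGraph (Fin n))) : ℕ :=
  ((fun G => Quotient.mk (graphSetoid n) G) '' S).ncard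

/-!
Write `k = 2 * s`, and root `T` at a centre `c`, so that every vertex has depth at most `s + 1`.
Vertices in different branches at `c` are joined through `c`, while two vertices in the same branch
have distance at most the sum of their depths minus two. Let `D` contain one vertex of depth `s + 1`
from each branch that reaches this depth; `D` is independent. Every `w ∉ D` lies in a maximal
independent set whose members of depth `s + 1` other than `w` all belong to `D`; two such sets for
different `w` are different, since vertices of depth at most `s` are never independent. Hence
`n - |D| ≤ mdi`, and as the branches meeting `D` contain at least `s + 1` vertices each,
`|D| * (s + 1) < n = p * (s + 1)`, so `mdi ≥ n - (p - 1)`.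

In the case of equality `|D| = p - 1`, and `D` itself is not among the sets counted, so it is not
maximal. The vertex that can be added to it has depth `s` and lies in a further branch. The paths
from `c` to this vertex and to the members of `D` already make up all `n` vertices, so they form
`S'_{p,s+1}`. Conversely, in `S'_{p,s+1}` a maximal independent set has exactly one member that is
not at depth `s + 1`, and is determined by it.
-/

section Walk

variable {V : Type*} {G : SimpleGraph V} {c : V}

lemma mem_support_of_ne {β : Type*} {b : V → β}
    (hb : ∀ u v, G.Adj u v → u ≠ c → v ≠ c → b u = b v) {u v : V} (w : G.Walk u v)
    (huv : b u ≠ b v) : c ∈ w.support := by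
  induction w with
  | nil => exact absurd rfl huv
  | @cons u x v hux w ih =>
    rw [SimpleGraph.Walk.support_cons, List.mem_cons]
    by_cases hu : c = u
    · exact .inl hu
    · by_cases hx : x = c
      · exact .inr (hx ▸ w.start_mem_support)
      · exact .inr (ih (hb u x hux (Ne.symm hu) hx ▸ huv))

lemma dist_eq_dist_add_dist_of_ne (hG : G.Connected) {β : Type*} {b : V → β}
    (hb : ∀ u v, G.Adj u v → u ≠ c → v ≠ c → b u = b v) {u v : V} (huv : b u ≠ b v) :
    G.dist u v = G.dist c u + G.dist c v := by
  classical
  obtain ⟨w, hw⟩ := hG.exists_walk_length_eq_dist u v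
  have hc := mem_support_of_ne hb w huv
  rw [G.dist_comm (u := c) (v := u)]
  refine le_antisymm hG.dist_triangle ?_
  calc G.dist u c + G.dist c v
      ≤ (w.takeUntil c hc).length + (w.dropUntil c hc).length :=
        add_le_add (G.dist_le _) (G.dist_le _)
    _ = w.length := by rw [← SimpleGraph.Walk.length_append, w.take_spec]
    _ = G.dist u v := hw

lemma exists_walk_length_le_of_descent {d : V → ℕ}
    (hd : ∀ v ≠ c, ∃ u, G.Adj u v ∧ d u + 1 = d v) (v : V) :
    ∃ w : G.Walk c v, w.length ≤ d v := by
  induction hn : d v generalizing v with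
  | zero =>
    obtain rfl : v = c := by
      by_contra hv
      obtain ⟨u, -, hu⟩ := hd v hv
      omega
    exact ⟨.nil, le_rfl⟩
  | succ n ih =>
    by_cases hv : v = c
    · subst hv
      exact ⟨.nil, Nat.zero_le _⟩
    · obtain ⟨u, huv, hu⟩ := hd v hv
      obtain ⟨w, hw⟩ := ih u (by omega)
      exact ⟨w.concat huv, by rw [SimpleGraph.Walk.length_concat]; omega⟩

lemma connected_of_descent {d : V → ℕ} (hd : ∀ v ≠ c, ∃ u, G.Adj u v ∧ d u + 1 = d v) :
    G.Connected :=
  G.connected_iff_exists_forall_reachable.2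
    ⟨c, fun v => (exists_walk_length_le_of_descent hd v).choose.reachable⟩

lemma le_add_length_of_adj {d : V → ℕ} (hd : ∀ u v, G.Adj u v → d v ≤ d u + 1) {u v : V}
    (w : G.Walk u v) : d v ≤ d u + w.length := by
  induction w with
  | nil => exact le_rfl
  | cons h w ih =>
    have := hd _ _ h
    rw [SimpleGraph.Walk.length_cons]
    omega

lemma dist_eq_of_descent {d : V → ℕ} (hc : d c = 0) (hd : ∀ u v, G.Adj u v → d v ≤ d u + 1)
    (hdesc : ∀ v ≠ c, ∃ u, G.Adj u v ∧ d u + 1 = d v) (v : V) : G.dist c v = d v := by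
  obtain ⟨w, hw⟩ := exists_walk_length_le_of_descent hdesc v
  obtain ⟨w', hw'⟩ := (connected_of_descent hdesc).exists_walk_length_eq_dist c v
  refine le_antisymm ((G.dist_le w).trans hw) ?_
  simpa only [hc, hw', zero_add] using le_add_length_of_adj hd w'

end Walk

section Iso

variable {V W : Type*} {G : SimpleGraph V} {H : SimpleGraph W}

lemma dist_apply_le (f : G →g H) (hG : G.Connected) (u v : V) :
    H.dist (f u) (f v) ≤ G.dist u v := by
  obtain ⟨w, hw⟩ := hG.exists_walk_length_eq_dist u v
  rw [← hw, ← w.length_map f]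
  exact H.dist_le _

lemma dist_iso_apply (e : G ≃g H) (hG : G.Connected) (u v : V) :
    H.dist (e u) (e v) = G.dist u v := by
  refine le_antisymm (dist_apply_le e.toHom hG u v) ?_
  simpa using dist_apply_le e.symm.toHom (e.connected_iff.1 hG) (e u) (e v)

lemma nonempty_iso_of_bijective_hom (hG : G.Connected) (hH : H.IsTree) (f : G →g H)
    (hf : Function.Bijective f) : Nonempty (G ≃g H) := by
  let e := SimpleGraph.Iso.comap (Equiv.ofBijective f hf) H
  have hmin := SimpleGraph.isTree_iff_minimal_connected.1 (e.isTree_iff.2 hH)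
  have heq : G = H.comap (Equiv.ofBijective f hf) :=
    hmin.eq_of_le hG fun _ _ h => f.map_adj h
  exact ⟨heq ▸ e⟩

end Iso

section RootedTree

variable {V : Type*} {G : SimpleGraph V} {c : V}

open Classical in
/-- The parent of `v` when `G` is rooted at `c`: a neighbour of `v` that is closer to `c`, with
junk value `v` if there is none. -/
noncomputable def parent (G : SimpleGraph V) (c v : V) : V :=
  if h : ∃ u, G.Adj u v ∧ G.dist c u + 1 = G.dist c v then h.choose else v

/-- The ancestor of `v` at depth `j` when `G` is rooted at `c`; it is `v` itself if `j` exceeds the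
depth of `v`. -/
noncomputable def ancestor (G : SimpleGraph V) (c : V) (j : ℕ) (v : V) : V :=
  (parent G c)^[G.dist c v - j] v

/-- The branch of `G` at `c` containing `v`, represented by its vertex adjacent to `c`. The root
itself forms the extra branch `c`. -/
noncomputable def branch (G : SimpleGraph V) (c v : V) : V :=
  ancestor G c 1 v

lemma parent_spec (hG : G.Connected) {v : V} (hv : v ≠ c) :
    G.Adj (parent G c v) v ∧ G.dist c (parent G c v) + 1 = G.dist c v := by
  have hex : ∃ u, G.Adj u v ∧ G.dist c u + 1 = G.dist c v := by
    obtain ⟨w, hw⟩ := hG.exists_walk_length_eq_dist v c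
    cases w with
    | nil => exact absurd rfl hv
    | @cons _ u _ hvu w =>
      have hle := G.dist_le w
      have htri := hG.dist_triangle (u := v) (v := u) (w := c)
      rw [SimpleGraph.dist_eq_one_iff_adj.2 hvu] at htri
      rw [SimpleGraph.Walk.length_cons] at hw
      refine ⟨u, hvu.symm, ?_⟩
      rw [G.dist_comm (u := c) (v := u), G.dist_comm (u := c) (v := v)]
      omega
  rw [parent, dif_pos hex]
  exact hex.choose_spec

lemma eq_of_adj_of_dist_add_one_eq (hG : G.IsTree) {u u' v : V} (hu : G.Adj u v)
    (hu' : G.Adj u' v) (hd : G.dist c u + 1 = G.dist c v) (hd' : G.dist c u' + 1 = G.dist c v) :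
    u = u' := by
  have isPath_concat : ∀ {x} (w : G.Walk c x) (hx : G.Adj x v), w.length = G.dist c x →
      G.dist c x + 1 = G.dist c v → (w.concat hx).IsPath := fun w hx hw hd =>
    SimpleGraph.Walk.isPath_of_length_eq_dist _ (by rw [SimpleGraph.Walk.length_concat, hw, hd])
  obtain ⟨w, hw⟩ := hG.connected.exists_walk_length_eq_dist c u
  obtain ⟨w', hw'⟩ := hG.connected.exists_walk_length_eq_dist c u'
  have heq := (hG.existsUnique_path c v).unique (isPath_concat w hu hw hd)
    (isPath_concat w' hu' hw' hd')
  simpa using congrArg SimpleGraph.Walk.penultimate heq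

lemma dist_iterate_parent (hG : G.Connected) {j : ℕ} {v : V} (hj : j ≤ G.dist c v) :
    G.dist c ((parent G c)^[j] v) + j = G.dist c v ∧ G.dist ((parent G c)^[j] v) v ≤ j := by
  induction j with
  | zero => simp
  | succ j ih =>
    obtain ⟨ihc, ihv⟩ := ih (by omega)
    rw [Function.iterate_succ_apply']
    set x := (parent G c)^[j] v
    have hx : x ≠ c := by
      intro hx
      rw [hx, G.dist_self] at ihc
      omega
    obtain ⟨hadj, hdist⟩ := parent_spec hG hx
    have htri := hG.dist_triangle (u := parent G c x) (v := x) (w := v)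
    rw [SimpleGraph.dist_eq_one_iff_adj.2 hadj] at htri
    omega

lemma dist_ancestor (hG : G.Connected) {j : ℕ} {v : V} (hj : j ≤ G.dist c v) :
    G.dist c (ancestor G c j v) = j := by
  have := (dist_iterate_parent hG (c := c) (j := G.dist c v - j) (v := v) (by omega)).1
  rw [ancestor]
  omega

lemma dist_ancestor_self_le (hG : G.Connected) (j : ℕ) (v : V) :
    G.dist (ancestor G c j v) v ≤ G.dist c v - j :=
  (dist_iterate_parent hG (Nat.sub_le _ _)).2

lemma parent_ancestor_succ {j : ℕ} {v : V} (hj : j < G.dist c v) :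
    parent G c (ancestor G c (j + 1) v) = ancestor G c j v := by
  rw [ancestor, ancestor, ← Function.iterate_succ_apply' (parent G c)]
  congr 2
  omega

lemma ancestor_ancestor (hG : G.Connected) {i j : ℕ} {v : V} (hij : i ≤ j)
    (hj : j ≤ G.dist c v) : ancestor G c i (ancestor G c j v) = ancestor G c i v := by
  rw [ancestor, dist_ancestor hG hj, ancestor, ancestor, ← Function.iterate_add_apply]
  congr 2
  omega

lemma ancestor_zero (hG : G.Connected) (v : V) : ancestor G c 0 v = c :=
  (hG.dist_eq_zero_iff.1 (dist_ancestor hG (Nat.zero_le _))).symm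

lemma branch_ancestor (hG : G.Connected) {j : ℕ} {v : V} (h₁ : 1 ≤ j) (hj : j ≤ G.dist c v) :
    branch G c (ancestor G c j v) = branch G c v :=
  ancestor_ancestor hG h₁ hj

lemma adj_ancestor_succ (hG : G.Connected) {j : ℕ} {v : V} (hj : j < G.dist c v) :
    G.Adj (ancestor G c j v) (ancestor G c (j + 1) v) := by
  have hne : ancestor G c (j + 1) v ≠ c := by
    intro h
    simpa [h] using dist_ancestor hG (Nat.succ_le_of_lt hj)
  exact parent_ancestor_succ hj ▸ (parent_spec hG hne).1

lemma branch_self : branch G c c = c := by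
  simp [branch, ancestor]

lemma dist_branch_eq_one (hG : G.Connected) {v : V} (hv : v ≠ c) :
    G.dist c (branch G c v) = 1 :=
  dist_ancestor hG (hG.pos_dist_of_ne hv.symm)

lemma ne_root_of_branch_eq (hG : G.Connected) {u v : V} (hu : u ≠ c)
    (huv : branch G c u = branch G c v) : v ≠ c := by
  rintro rfl
  have := dist_branch_eq_one hG hu
  rw [huv, branch_self, G.dist_self] at this
  omega

lemma dist_add_two_le_of_branch_eq (hG : G.Connected) {u v : V} (hu : u ≠ c)
    (huv : branch G c u = branch G c v) : G.dist u v + 2 ≤ G.dist c u + G.dist c v := by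
  have hu₁ := hG.pos_dist_of_ne hu.symm
  have hv₁ := hG.pos_dist_of_ne (ne_root_of_branch_eq hG hu huv).symm
  have hub : G.dist (branch G c u) u ≤ G.dist c u - 1 := dist_ancestor_self_le hG 1 u
  have hvb : G.dist (branch G c v) v ≤ G.dist c v - 1 := dist_ancestor_self_le hG 1 v
  have htri := hG.dist_triangle (u := u) (v := branch G c u) (w := v)
  rw [G.dist_comm (u := u) (v := branch G c u)] at htri
  rw [← huv] at hvb
  omega

lemma dist_le_dist_root_add (hG : G.Connected) (u v : V) :
    G.dist u v ≤ G.dist c u + G.dist c v :=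
  G.dist_comm (u := c) (v := u) ▸ hG.dist_triangle

lemma branch_parent (hG : G.Connected) {v : V} (hv : v ≠ c) (hp : parent G c v ≠ c) :
    branch G c (parent G c v) = branch G c v := by
  have hd := (parent_spec hG hv).2
  have hpos := hG.pos_dist_of_ne hp.symm
  rw [branch, branch, ancestor, ancestor, ← Function.iterate_succ_apply]
  congr 2
  omega

lemma branch_eq_of_adj (hG : G.IsTree) {u v : V} (huv : G.Adj u v) (hu : u ≠ c) (hv : v ≠ c) :
    branch G c u = branch G c v := by
  have eq_parent : ∀ {x y}, G.Adj x y → y ≠ c → G.dist c y = G.dist c x + 1 →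
      x = parent G c y := fun hxy hy hd =>
    have hspec := parent_spec hG.connected hy
    eq_of_adj_of_dist_add_one_eq hG hxy hspec.1 hd.symm hspec.2
  rcases hG.dist_eq_dist_add_one_of_adj c huv with hd | hd
  · obtain rfl := eq_parent huv.symm hu hd
    exact (branch_parent hG.connected hu hv).symm
  · obtain rfl := eq_parent huv hv hd
    exact branch_parent hG.connected hv hu

lemma dist_eq_dist_add_dist_of_branch_ne (hG : G.IsTree) {u v : V}
    (huv : branch G c u ≠ branch G c v) : G.dist u v = G.dist c u + G.dist c v :=
  dist_eq_dist_add_dist_of_ne hG.connected (fun _ _ => branch_eq_of_adj hG) huv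

end RootedTree

section Center

variable {V : Type*} [Fintype V] {G : SimpleGraph V}

lemma dist_le_ecc (u v : V) : G.dist u v ≤ ecc G u :=
  Finset.le_sup (f := G.dist u) (Finset.mem_univ v)

lemma dist_le_gdiam (u v : V) : G.dist u v ≤ gdiam G :=
  (dist_le_ecc u v).trans (Finset.le_sup (f := ecc G) (Finset.mem_univ u))

lemma exists_dist_eq_ecc (u : V) : ∃ v, G.dist u v = ecc G u :=
  have ⟨v, _, hv⟩ := Finset.exists_mem_eq_sup Finset.univ ⟨u, Finset.mem_univ u⟩ (G.dist u)
  ⟨v, hv.symm⟩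

lemma exists_isCentral [Nonempty V] : ∃ c, IsCentral G c :=
  Finite.exists_min (ecc G)

-- If `ecc c > r`, stepping from `c` towards a farthest vertex `x` must not decrease the
-- eccentricity, so some `y` outside the branch of `x` has depth at least `r`, whence
-- `dist x y > 2 * r`.
lemma ecc_le_of_isCentral (hG : G.IsTree) {c : V} (hc : IsCentral G c) {r : ℕ}
    (hr : gdiam G ≤ 2 * r) : ecc G c ≤ r := by
  by_contra! hlt
  obtain ⟨x, hx⟩ := exists_dist_eq_ecc (G := G) c
  have hxc : x ≠ c := by
    rintro rfl
    rw [G.dist_self] at hx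
    omega
  obtain ⟨y, hy⟩ := exists_dist_eq_ecc (G := G) (branch G c x)
  have hcx : ecc G c ≤ ecc G (branch G c x) := hc _
  have hcy := dist_le_ecc (G := G) c y
  have hbx := dist_branch_eq_one hG.connected hxc
  by_cases hxy : branch G c x = branch G c y
  · have hby : G.dist (branch G c y) y ≤ G.dist c y - 1 :=
      dist_ancestor_self_le hG.connected 1 y
    rw [← hxy] at hby
    omega
  · have hby := dist_le_dist_root_add hG.connected (c := c) (branch G c x) y
    have hdxy := dist_eq_dist_add_dist_of_branch_ne hG hxy
    have hdiam := dist_le_gdiam (G := G) x y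
    omega

end Center

section IndependentSets

variable {V W : Type*} {G : SimpleGraph V} {H : SimpleGraph W} {k : ℕ}

lemma maxDkIndep_iff {J : Set V} :
    MaxDkIndep G k J ↔ ∀ x, x ∈ J ↔ ∀ u ∈ J, u ≠ x → k + 1 ≤ G.dist u x := by
  refine ⟨fun ⟨hJ, hmax⟩ x => ⟨fun hx u hu => hJ hu hx, fun hx => ?_⟩, fun h => ⟨?_, ?_⟩⟩
  · have hins : DkIndep G k (insert x J) := by
      rintro u (rfl | hu) v (rfl | hv) huv
      · exact absurd rfl huv
      · exact G.dist_comm ▸ hx v hv huv.symm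
      · exact hx u hu huv
      · exact hJ hu hv huv
    exact hmax _ hins (Set.subset_insert x J) ▸ Set.mem_insert x J
  · exact fun u hu v hv => (h v).1 hv u hu
  · exact fun J' hJ' hsub =>
      Set.Subset.antisymm (fun x hx => (h x).2 fun u hu => hJ' (hsub hu) hx) hsub

lemma exists_maxDkIndep_superset [Finite V] {I : Set V} (hI : DkIndep G k I) :
    ∃ J, I ⊆ J ∧ MaxDkIndep G k J :=
  have ⟨J, hIJ, hJ⟩ := (Set.toFinite {J : Set V | DkIndep G k J}).exists_le_maximal hI
  ⟨J, hIJ, hJ.1, fun _ hJ' hsub => (hJ.2 hJ' hsub).antisymm hsub⟩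

lemma mdi_congr (e : G ≃g H) (hG : G.Connected) : mdi G k = mdi H k := by
  have himage : ∀ J : Set V, MaxDkIndep G k J ↔ MaxDkIndep H k (e '' J) := by
    intro J
    simp only [maxDkIndep_iff, e.surjective.forall, Set.forall_mem_image,
      e.injective.mem_set_image, e.injective.ne_iff, dist_iso_apply e hG]
  exact Nat.card_congr ((Equiv.Set.congr e.toEquiv).subtypeEquiv himage)

lemma eq_of_maxDkIndep_of_common_mem {A J J' : Set V} (hA : DkIndep G k A)
    (hclose : ∀ u ∉ A, ∀ v ∉ A, G.dist u v ≤ k) (hJ : MaxDkIndep G k J)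
    (hJ' : MaxDkIndep G k J') {w : V} (hwA : w ∉ A) (hw : w ∈ J) (hw' : w ∈ J') : J = J' := by
  have mem_iff : ∀ {J}, MaxDkIndep G k J → w ∈ J → ∀ x,
      x ∈ J ↔ x = w ∨ x ∈ A ∧ k + 1 ≤ G.dist w x := by
    intro J hJ hw x
    have eq_or_mem : ∀ u ∈ J, u = w ∨ u ∈ A := by
      intro u hu
      by_contra! h
      have := hJ.1 hu hw h.1
      have := hclose u h.2 w hwA
      omega
    constructor
    · intro hx
      rcases eq_or_mem x hx with rfl | hxA
      · exact .inl rfl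
      · exact .inr ⟨hxA, hJ.1 hw hx fun h => hwA (h ▸ hxA)⟩
    · rintro (rfl | ⟨hxA, hwx⟩)
      · exact hw
      · refine (maxDkIndep_iff.1 hJ x).2 fun u hu hux => ?_
        rcases eq_or_mem u hu with rfl | huA
        · exact hwx
        · exact hA huA hxA hux
  ext x
  rw [mem_iff hJ hw, mem_iff hJ' hw']

-- A `k`-MDIS contains exactly one vertex outside `A`, and is determined by it.
lemma mdi_add_ncard_le [Finite V] {A : Set V} (hA : DkIndep G k A)
    (hclose : ∀ u ∉ A, ∀ v ∉ A, G.dist u v ≤ k)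
    (hfar : ∃ y ∉ A, ∀ x ∈ A, k + 1 ≤ G.dist x y) : mdi G k + A.ncard ≤ Nat.card V := by
  obtain ⟨y, hyA, hy⟩ := hfar
  have : Nonempty V := ⟨y⟩
  have exists_mem_notMem : ∀ J, MaxDkIndep G k J → ∃ w ∈ J, w ∉ A := by
    intro J hJ
    by_contra! hJA
    exact hyA (hJA y ((maxDkIndep_iff.1 hJ y).2 fun u hu _ => hy u (hJA u hu)))
  choose! w hwJ hwA using exists_mem_notMem
  have hle : mdi G k ≤ Aᶜ.ncard :=
    Set.ncard_le_ncard_of_injOn w hwA fun J hJ J' hJ' heq =>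
      eq_of_maxDkIndep_of_common_mem hA hclose hJ hJ' (hwA J hJ) (hwJ J hJ) (heq ▸ hwJ J' hJ')
  have := A.ncard_add_ncard_compl
  omega

end IndependentSets

section Transversal

variable {V : Type*} {G : SimpleGraph V} {c : V} {m s : ℕ} {D : Set V}

/-- `D` is a transversal, consisting of vertices at depth `m`, of those branches of `G` at `c` that
contain a vertex at depth `m`. -/
structure IsBranchTransversal (G : SimpleGraph V) (c : V) (m : ℕ) (D : Set V) : Prop where
  dist_eq : ∀ x ∈ D, G.dist c x = m
  injOn_branch : Set.InjOn (branch G c) D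
  exists_branch_eq : ∀ x, G.dist c x = m → ∃ y ∈ D, branch G c y = branch G c x

lemma exists_isBranchTransversal (G : SimpleGraph V) (c : V) (m : ℕ) :
    ∃ D, IsBranchTransversal G c m D :=
  have ⟨D, hsub, hbij⟩ := Set.exists_subset_bijOn {x | G.dist c x = m} (branch G c)
  ⟨D, fun _ hx => hsub hx, hbij.injOn, fun x hx => hbij.surjOn ⟨x, hx, rfl⟩⟩

namespace IsBranchTransversal

lemma dkIndep (hD : IsBranchTransversal G c (s + 1) D) (hG : G.IsTree) :
    DkIndep G (2 * s) D := by
  intro u hu v hv huv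
  rw [dist_eq_dist_add_dist_of_branch_ne hG (hD.injOn_branch.ne hu hv huv), hD.dist_eq u hu,
    hD.dist_eq v hv]
  omega

lemma branch_ne_of_dist (hD : IsBranchTransversal G c (s + 1) D) (hG : G.Connected)
    {x y : V} (hx : x ∈ D) (hy : G.dist c y ≤ s + 1) (hxy : 2 * s + 1 ≤ G.dist x y) :
    branch G c x ≠ branch G c y := by
  intro heq
  have hxd := hD.dist_eq x hx
  have hxc : x ≠ c := by
    rintro rfl
    rw [G.dist_self] at hxd
    omega
  have := dist_add_two_le_of_branch_eq hG hxc heq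
  omega

lemma dkIndep_insert (hD : IsBranchTransversal G c (s + 1) D) (hG : G.IsTree) {w : V}
    (hw : s ≤ G.dist c w) :
    DkIndep G (2 * s) (insert w {x ∈ D | branch G c x ≠ branch G c w}) := by
  have far_of_branch_ne : ∀ x ∈ D, branch G c x ≠ branch G c w → 2 * s + 1 ≤ G.dist x w := by
    intro x hx hxw
    rw [dist_eq_dist_add_dist_of_branch_ne hG hxw, hD.dist_eq x hx]
    omega
  rintro u (rfl | ⟨huD, hu⟩) v (rfl | ⟨hvD, hv⟩) huv
  · exact absurd rfl huv
  · exact G.dist_comm ▸ far_of_branch_ne v hvD hv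
  · exact far_of_branch_ne u huD hu
  · exact hD.dkIndep hG huD hvD huv

variable [Finite V]

-- A set containing `w` with `dist c w < s` misses depth `s + 1`; otherwise extend
-- `w` by the members of `D` outside its branch, which block depth `s + 1` of all other branches.
lemma exists_maxDkIndep (hD : IsBranchTransversal G c (s + 1) D) (hG : G.IsTree)
    (hdepth : ∀ v, G.dist c v ≤ s + 1) (w : V) :
    ∃ J, MaxDkIndep G (2 * s) J ∧ w ∈ J ∧ ∀ x ∈ J, G.dist c x = s + 1 → x ∉ D → x = w := by
  rcases lt_or_ge (G.dist c w) s with hw | hw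
  · obtain ⟨J, hwJ, hJ⟩ := exists_maxDkIndep_superset (G := G) (k := 2 * s) (I := {w})
      fun _ hu _ hv huv => absurd (hu.trans hv.symm) huv
    rw [Set.singleton_subset_iff] at hwJ
    refine ⟨J, hJ, hwJ, fun x hxJ hx _ => ?_⟩
    by_contra hxw
    have := hJ.1 hxJ hwJ hxw
    have := dist_le_dist_root_add hG.connected (c := c) x w
    omega
  · obtain ⟨J, hIJ, hJ⟩ := exists_maxDkIndep_superset (hD.dkIndep_insert hG hw)
    rw [Set.insert_subset_iff] at hIJ
    refine ⟨J, hJ, hIJ.1, fun x hxJ hx hxD => ?_⟩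
    by_contra hxw
    obtain ⟨y, hyD, hyx⟩ := hD.exists_branch_eq x hx
    have hyw : branch G c y ≠ branch G c w := by
      intro hyw
      have hxc : x ≠ c := by
        rintro rfl
        rw [G.dist_self] at hx
        omega
      have := dist_add_two_le_of_branch_eq hG.connected hxc (hyx.symm.trans hyw)
      have := hJ.1 hxJ hIJ.1 hxw
      have := hdepth w
      omega
    have hyJ : y ∈ J := hIJ.2 ⟨hyD, hyw⟩
    exact hD.branch_ne_of_dist hG.connected hyD hx.le
      (hJ.1 hyJ hxJ fun h => hxD (h ▸ hyD)) hyx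

lemma ncard_compl_le (hD : IsBranchTransversal G c (s + 1) D) (hG : G.IsTree)
    (hdepth : ∀ v, G.dist c v ≤ s + 1) :
    Dᶜ.ncard ≤ ({J | MaxDkIndep G (2 * s) J} \ {D}).ncard := by
  choose M hM hwM hdeep using hD.exists_maxDkIndep hG hdepth
  refine Set.ncard_le_ncard_of_injOn M
    (fun w hw => ⟨hM w, fun h => hw (h ▸ hwM w)⟩) fun u hu v hv huv => ?_
  by_contra hne
  have hvu : v ∈ M u := huv ▸ hwM v
  have hud : G.dist c u ≠ s + 1 := fun h => hne (hdeep v u (huv ▸ hwM u) h hu)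
  have hvd : G.dist c v ≠ s + 1 := fun h => hne (hdeep u v hvu h hv).symm
  have := hdepth u
  have := hdepth v
  have := (hM u).1 (hwM u) hvu hne
  have := dist_le_dist_root_add hG.connected (c := c) u v
  omega

lemma card_le_mdi_add_ncard (hD : IsBranchTransversal G c (s + 1) D) (hG : G.IsTree)
    (hdepth : ∀ v, G.dist c v ≤ s + 1) : Nat.card V ≤ mdi G (2 * s) + D.ncard := by
  have hle : Dᶜ.ncard ≤ mdi G (2 * s) :=
    (hD.ncard_compl_le hG hdepth).trans (Set.ncard_le_ncard Set.sdiff_subset)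
  have := D.ncard_add_ncard_compl
  omega

lemma not_maxDkIndep (hD : IsBranchTransversal G c (s + 1) D) (hG : G.IsTree)
    (hdepth : ∀ v, G.dist c v ≤ s + 1) (hcard : mdi G (2 * s) + D.ncard ≤ Nat.card V) :
    ¬ MaxDkIndep G (2 * s) D := by
  intro hmax
  have hle := hD.ncard_compl_le hG hdepth
  have hdiff : ({J | MaxDkIndep G (2 * s) J} \ {D}).ncard + 1 = mdi G (2 * s) :=
    Set.ncard_sdiff_singleton_add_one hmax
  have := D.ncard_add_ncard_compl
  omega

lemma exists_branch_notMem (hD : IsBranchTransversal G c (s + 1) D) (hG : G.IsTree)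
    (hdepth : ∀ v, G.dist c v ≤ s + 1) (hne : D.Nonempty)
    (hcard : mdi G (2 * s) + D.ncard ≤ Nat.card V) :
    ∃ y, G.dist c y = s ∧ ∀ x ∈ D, branch G c x ≠ branch G c y := by
  have hfar : ∃ y, ∀ x ∈ D, 2 * s + 1 ≤ G.dist x y := by
    have := mt maxDkIndep_iff.2 (hD.not_maxDkIndep hG hdepth hcard)
    push Not at this
    obtain ⟨y, ⟨hyD, u, huD, huy, hlt⟩ | ⟨hyD, hy⟩⟩ := this
    · exact absurd (hD.dkIndep hG huD hyD huy) hlt.not_ge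
    · exact ⟨y, fun x hx => hy x hx fun h => hyD (h ▸ hx)⟩
  obtain ⟨y, hy⟩ := hfar
  have hbranch : ∀ x ∈ D, branch G c x ≠ branch G c y := fun x hx =>
    hD.branch_ne_of_dist hG.connected hx (hdepth y) (hy x hx)
  refine ⟨y, ?_, hbranch⟩
  have hdeep : G.dist c y ≠ s + 1 := fun h =>
    have ⟨z, hzD, hz⟩ := hD.exists_branch_eq y h
    hbranch z hzD hz
  obtain ⟨x, hx⟩ := hne
  have := hy x hx
  have := hD.dist_eq x hx
  have := dist_le_dist_root_add hG.connected (c := c) x y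
  have := hdepth y
  omega

end IsBranchTransversal

end Transversal

section Legs

variable {V ι : Type*} {G : SimpleGraph V} {c : V} {m : ℕ} {l : ι → V}

/-- The depth of a vertex in a spider with legs indexed by `ι`, where `none` is the centre and
`some (i, j)` is the vertex at depth `j + 1` on the leg `i`. -/
def spiderDepth : Option (ι × Fin m) → ℕ
  | none => 0
  | some (_, j) => j + 1

/-- The map from the spider with legs indexed by `ι` into `G` which sends the centre to `c` and the
leg `i` along the path from `c` to `l i`. -/
noncomputable def legMap (G : SimpleGraph V) (c : V) (l : ι → V) : Option (ι × Fin m) → V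
  | none => c
  | some (i, j) => ancestor G c (j + 1) (l i)

lemma dist_legMap (hG : G.Connected) {a : Option (ι × Fin m)}
    (ha : ∀ q ∈ a, (q.2 : ℕ) < G.dist c (l q.1)) :
    G.dist c (legMap G c l a) = spiderDepth a := by
  rcases a with _ | ⟨i, j⟩
  · exact G.dist_self
  · exact dist_ancestor hG (ha (i, j) rfl)

lemma injOn_legMap (hG : G.Connected) (hl : Function.Injective fun i => branch G c (l i)) :
    Set.InjOn (legMap G c l)
      {a : Option (ι × Fin m) | ∀ q ∈ a, (q.2 : ℕ) < G.dist c (l q.1)} := by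
  intro a ha b hb hab
  have hdepth : spiderDepth a = spiderDepth b := by
    rw [← dist_legMap hG ha, ← dist_legMap hG hb, hab]
  rcases a with _ | ⟨i, j⟩ <;> rcases b with _ | ⟨i', j'⟩
  · rfl
  · exact absurd hdepth.symm (Nat.succ_ne_zero _)
  · exact absurd hdepth (Nat.succ_ne_zero _)
  · obtain rfl : j = j' := Fin.ext (Nat.succ_injective hdepth)
    obtain rfl : i = i' := hl <| by
      change branch G c (l i) = branch G c (l i')
      rw [← branch_ancestor hG (Nat.le_add_left 1 j) (ha (i, j) rfl),
        ← branch_ancestor hG (Nat.le_add_left 1 j) (hb (i', j) rfl)]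
      exact congrArg (branch G c) hab
    rfl

lemma IsBranchTransversal.ncard_mul_add_one_le [Finite V] {D : Set V}
    (hD : IsBranchTransversal G c m D) (hG : G.Connected) : D.ncard * m + 1 ≤ Nat.card V := by
  have hinj : Function.Injective
      (legMap G c Subtype.val : Option (D × Fin m) → V) := fun a b hab =>
    injOn_legMap hG (hD.injOn_branch.injective) (fun q _ => (hD.dist_eq q.1 q.1.2).symm ▸ q.2.2)
      (fun q _ => (hD.dist_eq q.1 q.1.2).symm ▸ q.2.2) hab
  calc D.ncard * m + 1 = Nat.card (Option (D × Fin m)) := by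
        rw [Finite.card_option, Nat.card_prod, Nat.card_coe_set_eq, Nat.card_fin]
    _ ≤ Nat.card V := Nat.card_le_card_of_injective _ hinj

end Legs

section Spider

variable {p m s : ℕ}

lemma spider_adj_none_some {i : Fin p} {j : Fin m} :
    (spider p m).Adj none (some (i, j)) ↔ (j : ℕ) = 0 := by
  simp [spider]

lemma spider_adj_some_some {i i' : Fin p} {j j' : Fin m} :
    (spider p m).Adj (some (i, j)) (some (i', j')) ↔
      i = i' ∧ ((j : ℕ) + 1 = j' ∨ (j' : ℕ) + 1 = j) := by
  simp only [spider, SimpleGraph.fromRel_adj, ne_eq, Option.some.injEq, Prod.mk.injEq, Fin.ext_iff]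
  omega

lemma spiderDepth_le_add_one_of_adj {a b : Option (Fin p × Fin m)} (hab : (spider p m).Adj a b) :
    spiderDepth b ≤ spiderDepth a + 1 := by
  rcases a with _ | ⟨i, j⟩ <;> rcases b with _ | ⟨i', j'⟩
  · exact Nat.zero_le _
  · exact (Nat.succ_le_succ (spider_adj_none_some.1 hab).le)
  · exact Nat.zero_le _
  · have := (spider_adj_some_some.1 hab).2
    simp only [spiderDepth]
    omega

lemma map_fst_eq_of_spider_adj {a b : Option (Fin p × Fin m)} (hab : (spider p m).Adj a b)
    (ha : a ≠ none) (hb : b ≠ none) : a.map Prod.fst = b.map Prod.fst := by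
  obtain ⟨⟨i, j⟩, rfl⟩ := Option.ne_none_iff_exists'.1 ha
  obtain ⟨⟨i', j'⟩, rfl⟩ := Option.ne_none_iff_exists'.1 hb
  exact congrArg some (spider_adj_some_some.1 hab).1

lemma adj_legMap {V : Type*} {G : SimpleGraph V} (hG : G.Connected) {c : V} {l : Fin p → V}
    {a b : Option (Fin p × Fin m)} (hab : (spider p m).Adj a b)
    (ha : ∀ q ∈ a, (q.2 : ℕ) < G.dist c (l q.1)) (hb : ∀ q ∈ b, (q.2 : ℕ) < G.dist c (l q.1)) :
    G.Adj (legMap G c l a) (legMap G c l b) := by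
  have adj_zero : ∀ {i : Fin p} {j : Fin m}, (j : ℕ) = 0 → (j : ℕ) < G.dist c (l i) →
      G.Adj c (ancestor G c (j + 1) (l i)) := fun {i} {j} hj hlt => by
    have hadj := adj_ancestor_succ hG hlt
    rwa [show ancestor G c j (l i) = c from hj ▸ ancestor_zero hG _] at hadj
  rcases a with _ | ⟨i, j⟩ <;> rcases b with _ | ⟨i', j'⟩
  · exact absurd hab (spider p m).irrefl
  · exact adj_zero (spider_adj_none_some.1 hab) (hb (i', j') rfl)
  · exact (adj_zero (spider_adj_none_some.1 hab.symm) (ha (i, j) rfl)).symm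
  · obtain ⟨rfl, hj | hj⟩ := spider_adj_some_some.1 hab
    · rw [legMap, legMap, hj]
      exact adj_ancestor_succ hG (hb (i, j') rfl)
    · rw [legMap, legMap, hj]
      exact (adj_ancestor_succ hG (ha (i, j) rfl)).symm

end Spider

section SpiderMinusLeaf

variable {p m s : ℕ} (hp : 0 < p) (hm : 0 < m)

/-- The vertex set of `spider' p m hp hm`. -/
abbrev spider'Verts (p m : ℕ) (hp : 0 < p) (hm : 0 < m) : Set (Option (Fin p × Fin m)) :=
  {v | v ≠ some (⟨0, hp⟩, ⟨m - 1, Nat.sub_lt hm Nat.one_pos⟩)}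

/-- The centre of `spider' p m hp hm`. -/
def spider'Center : spider'Verts p m hp hm :=
  ⟨none, (Option.some_ne_none _).symm⟩

lemma some_mem_spider'Verts {i : Fin p} {j : Fin m} :
    some (i, j) ∈ spider'Verts p m hp hm ↔ (i : ℕ) ≠ 0 ∨ (j : ℕ) + 1 ≠ m := by
  simp only [spider'Verts, Set.mem_ofPred_eq, ne_eq, Option.some.injEq, Prod.mk.injEq, Fin.ext_iff]
  omega

lemma card_spider'Verts : Nat.card (spider'Verts p m hp hm) = p * m := by
  have hcompl := Set.ncard_add_ncard_compl
    {(some (⟨0, hp⟩, ⟨m - 1, Nat.sub_lt hm Nat.one_pos⟩) : Option (Fin p × Fin m))}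
  rw [Set.ncard_singleton, Finite.card_option, Nat.card_prod, Nat.card_fin, Nat.card_fin,
    add_comm] at hcompl
  exact Nat.succ_injective hcompl

lemma exists_spider'_adj_depth_add_one_eq :
    ∀ v ≠ spider'Center hp hm,
      ∃ u, (spider' p m hp hm).Adj u v ∧ spiderDepth u.1 + 1 = spiderDepth v.1 := by
  rintro ⟨_ | ⟨i, ⟨_ | j, hj⟩⟩, hv⟩ hne
  · exact absurd rfl hne
  · exact ⟨spider'Center hp hm, spider_adj_none_some.2 rfl, rfl⟩
  · exact ⟨⟨some (i, ⟨j, by omega⟩), (some_mem_spider'Verts hp hm).2 (.inr hj.ne)⟩,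
      spider_adj_some_some.2 ⟨rfl, .inl rfl⟩, rfl⟩

lemma spider'_connected : (spider' p m hp hm).Connected :=
  connected_of_descent (exists_spider'_adj_depth_add_one_eq hp hm)

lemma dist_spider'Center (v : spider'Verts p m hp hm) :
    (spider' p m hp hm).dist (spider'Center hp hm) v = spiderDepth v.1 :=
  dist_eq_of_descent (d := fun v => spiderDepth v.1) rfl (fun _ _ => spiderDepth_le_add_one_of_adj)
    (exists_spider'_adj_depth_add_one_eq hp hm) v

lemma dist_spider'_le (u v : spider'Verts p m hp hm) :
    (spider' p m hp hm).dist u v ≤ spiderDepth u.1 + spiderDepth v.1 := by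
  rw [← dist_spider'Center, ← dist_spider'Center]
  exact dist_le_dist_root_add (spider'_connected hp hm) u v

lemma dist_spider'_eq_of_leg_ne {u v : spider'Verts p m hp hm}
    (huv : u.1.map Prod.fst ≠ v.1.map Prod.fst) :
    (spider' p m hp hm).dist u v = spiderDepth u.1 + spiderDepth v.1 := by
  have coe_ne_none : ∀ v ≠ spider'Center hp hm, v.1 ≠ none := fun _ hv h => hv (Subtype.ext h)
  rw [← dist_spider'Center, ← dist_spider'Center]
  exact dist_eq_dist_add_dist_of_ne (spider'_connected hp hm) (fun u v hadj hu hv =>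
    map_fst_eq_of_spider_adj hadj (coe_ne_none u hu) (coe_ne_none v hv)) huv

lemma leg_ne_of_spiderDepth_eq {u v : Option (Fin p × Fin m)}
    (huv : u ≠ v) (h : spiderDepth u = spiderDepth v) : u.map Prod.fst ≠ v.map Prod.fst := by
  rcases u with _ | ⟨i, j⟩ <;> rcases v with _ | ⟨i', j'⟩
  · exact absurd rfl huv
  · exact (Option.some_ne_none i').symm
  · exact Option.some_ne_none i
  · obtain rfl : j = j' := Fin.ext (Nat.succ_injective h)
    rintro ⟨⟩
    exact huv rfl

lemma spiderDepth_le {ι : Type*} (a : Option (ι × Fin m)) : spiderDepth a ≤ m := by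
  rcases a with _ | ⟨_, j⟩
  · exact Nat.zero_le m
  · exact j.2

lemma le_ncard_spiderDepth_eq :
    p - 1 ≤ {v : spider'Verts p m hp hm | spiderDepth v.1 = m}.ncard := by
  have hmem : ∀ i : Fin (p - 1), some ((⟨i + 1, by omega⟩ : Fin p), (⟨m - 1, by omega⟩ : Fin m)) ∈
      spider'Verts p m hp hm := fun i =>
    (some_mem_spider'Verts hp hm).2 (.inl i.1.succ_ne_zero)
  calc p - 1 = (Set.univ : Set (Fin (p - 1))).ncard := by rw [Set.ncard_univ, Nat.card_fin]
    _ ≤ _ := Set.ncard_le_ncard_of_injOn (fun i => ⟨_, hmem i⟩)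
      (fun i _ => Nat.sub_add_cancel hm) fun _ _ _ _ h => by
        simpa [Fin.ext_iff] using h

lemma mdi_spider'_add_le (hs : 0 < s) :
    mdi (spider' p (s + 1) hp s.add_one_pos) (2 * s) + (p - 1) ≤ p * (s + 1) := by
  have hm := s.add_one_pos
  let A : Set (spider'Verts p (s + 1) hp hm) := {v | spiderDepth v.1 = s + 1}
  have hindep : DkIndep (spider' p (s + 1) hp hm) (2 * s) A := by
    intro u (hu : _ = _) v (hv : _ = _) huv
    rw [dist_spider'_eq_of_leg_ne hp hm (leg_ne_of_spiderDepth_eq (Subtype.coe_ne_coe.2 huv)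
      (hu.trans hv.symm)), hu, hv]
    omega
  have hclose : ∀ u ∉ A, ∀ v ∉ A, (spider' p (s + 1) hp hm).dist u v ≤ 2 * s := by
    intro u hu v hv
    have := (spiderDepth_le u.1).lt_of_ne hu
    have := (spiderDepth_le v.1).lt_of_ne hv
    have := dist_spider'_le hp hm u v
    omega
  have hfar : ∃ y ∉ A, ∀ x ∈ A, 2 * s + 1 ≤ (spider' p (s + 1) hp hm).dist x y := by
    refine ⟨⟨some (⟨0, hp⟩, ⟨s - 1, by omega⟩),
      (some_mem_spider'Verts hp hm).2 (.inr (by simp only; omega))⟩,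
      fun hy : s - 1 + 1 = s + 1 => by omega, ?_⟩
    rintro ⟨_ | ⟨i, j⟩, hx⟩ (hxA : _ = _)
    · exact absurd hxA s.succ_ne_zero.symm
    · have hi : (i : ℕ) ≠ 0 :=
        ((some_mem_spider'Verts hp hm).1 hx).resolve_right (not_not_intro hxA)
      rw [dist_spider'_eq_of_leg_ne hp hm (by simpa [Fin.ext_iff] using hi), hxA]
      simp only [spiderDepth]
      omega
  calc mdi (spider' p (s + 1) hp hm) (2 * s) + (p - 1)
      ≤ mdi (spider' p (s + 1) hp hm) (2 * s) + A.ncard :=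
        Nat.add_le_add_left (le_ncard_spiderDepth_eq hp hm) _
    _ ≤ Nat.card (spider'Verts p (s + 1) hp hm) := mdi_add_ncard_le hindep hclose hfar
    _ = p * (s + 1) := card_spider'Verts hp hm

lemma nonempty_iso_of_legs {V : Type*} [Finite V] {G : SimpleGraph V} (hG : G.IsTree) {c : V}
    {l : Fin p → V} (hl : Function.Injective fun i => branch G c (l i))
    (hfst : m ≤ G.dist c (l ⟨0, hp⟩) + 1) (hne : ∀ i : Fin p, (i : ℕ) ≠ 0 → m ≤ G.dist c (l i))
    (hcard : Nat.card V = p * m) : Nonempty (G ≃g spider' p m hp hm) := by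
  have lt_dist : ∀ a ∈ spider'Verts p m hp hm, ∀ q ∈ a, (q.2 : ℕ) < G.dist c (l q.1) := by
    rintro a ha ⟨i, j⟩ rfl
    by_cases hi : (i : ℕ) = 0
    · obtain rfl : i = ⟨0, hp⟩ := Fin.ext hi
      have hj : (j : ℕ) + 1 ≠ m :=
        ((some_mem_spider'Verts hp hm).1 ha).resolve_left (not_not_intro rfl)
      change (j : ℕ) < G.dist c (l ⟨0, hp⟩)
      omega
    · exact j.2.trans_le (hne i hi)
  let f : spider' p m hp hm →g G :=
    ⟨fun v => legMap G c l v.1, fun {u v} huv =>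
      adj_legMap hG.connected huv (lt_dist u u.2) (lt_dist v v.2)⟩
  have hinj : Function.Injective f := fun u v huv => Subtype.ext <|
    injOn_legMap hG.connected hl (lt_dist u u.2) (lt_dist v v.2) huv
  have hbij : Function.Bijective f :=
    (Nat.bijective_iff_injective_and_card f).2 ⟨hinj, (card_spider'Verts hp hm).trans hcard.symm⟩
  exact (nonempty_iso_of_bijective_hom (spider'_connected hp hm) hG f hbij).map RelIso.symm

lemma IsBranchTransversal.nonempty_iso_spider' {V : Type*} [Finite V] {G : SimpleGraph V}
    {c : V} {D : Set V} {q : ℕ} (hD : IsBranchTransversal G c (s + 1) D) (hG : G.IsTree)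
    (hncard : D.ncard = q) {y : V} (hy : G.dist c y = s)
    (hbranch : ∀ x ∈ D, branch G c x ≠ branch G c y)
    (hcard : Nat.card V = (q + 1) * (s + 1)) :
    Nonempty (G ≃g spider' (q + 1) (s + 1) q.add_one_pos s.add_one_pos) := by
  let e : Fin q ≃ D := (Finite.equivFinOfCardEq hncard).symm
  let l : Fin (q + 1) → V := Fin.cons y fun i => e i
  have hl : Function.Injective (branch G c ∘ l) := by
    rw [Fin.comp_cons, Fin.cons_injective_iff]
    exact ⟨fun ⟨i, hi⟩ => hbranch (e i) (e i).2 hi, hD.injOn_branch.injective.comp e.injective⟩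
  refine nonempty_iso_of_legs _ _ hG hl (Nat.succ_le_succ hy.ge) (fun i hi => ?_) hcard
  obtain ⟨j, rfl⟩ := Fin.exists_succ_eq.2 (Fin.val_ne_zero_iff.1 hi)
  exact (hD.dist_eq (e j) (e j).2).ge

lemma mdi_le_of_iso_spider' {V : Type*} {G : SimpleGraph V} (hs : 0 < s)
    (e : G ≃g spider' p (s + 1) hp s.add_one_pos) : mdi G (2 * s) ≤ p * s + 1 := by
  have hle := mdi_spider'_add_le hp hs
  rw [← mdi_congr e (e.connected_iff.2 (spider'_connected hp _)), Nat.mul_succ] at hle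
  omega

end SpiderMinusLeaf

section Main

variable {V : Type*} [Fintype V] {G : SimpleGraph V} {p s : ℕ}

lemma fk_two_mul_mul_add_one (hp : 2 ≤ p) : fk (2 * s) (p * (s + 1)) = p * s + 1 := by
  have hlt : ¬ p * (s + 1) ≤ 2 * s + 1 := by
    have := Nat.mul_le_mul_right (s + 1) hp
    omega
  rw [fk, if_neg hlt, Nat.mul_mod_right, Nat.mul_div_cancel_left s two_pos, Nat.sub_zero,
    Nat.mul_div_cancel p s.succ_pos, Nat.mul_succ, Nat.add_sub_cancel]

lemma exists_forall_dist_le (hG : G.IsTree) (hdiam : gdiam G ≤ 2 * (s + 1)) :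
    ∃ c, ∀ v, G.dist c v ≤ s + 1 :=
  have := hG.connected.nonempty
  have ⟨c, hc⟩ := exists_isCentral (G := G)
  ⟨c, fun v => (dist_le_ecc c v).trans (ecc_le_of_isCentral hG hc hdiam)⟩

lemma card_le_mdi_add_div (hG : G.IsTree) (hdiam : gdiam G ≤ 2 * (s + 1)) :
    Nat.card V ≤ mdi G (2 * s) + (Nat.card V - 1) / (s + 1) := by
  obtain ⟨c, hdepth⟩ := exists_forall_dist_le hG hdiam
  obtain ⟨D, hD⟩ := exists_isBranchTransversal G c (s + 1)
  have hcard := hD.ncard_mul_add_one_le hG.connected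
  calc Nat.card V ≤ mdi G (2 * s) + D.ncard := hD.card_le_mdi_add_ncard hG hdepth
    _ ≤ mdi G (2 * s) + (Nat.card V - 1) / (s + 1) :=
      Nat.add_le_add_left ((Nat.le_div_iff_mul_le s.succ_pos).2 (Nat.le_sub_one_of_lt hcard)) _

lemma mul_add_one_le_mdi (hp : 0 < p) (hG : G.IsTree) (hdiam : gdiam G ≤ 2 * (s + 1))
    (hcard : Nat.card V = p * (s + 1)) : p * s + 1 ≤ mdi G (2 * s) := by
  have hle := card_le_mdi_add_div hG hdiam
  have hdiv : (Nat.card V - 1) / (s + 1) < p := by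
    rw [hcard, Nat.div_lt_iff_lt_mul s.succ_pos]
    exact Nat.sub_lt (Nat.mul_pos hp s.succ_pos) one_pos
  rw [Nat.mul_succ] at hcard
  omega

lemma nonempty_iso_spider'_of_mdi_le (hp : 2 ≤ p) (hG : G.IsTree)
    (hdiam : gdiam G ≤ 2 * (s + 1)) (hcard : Nat.card V = p * (s + 1))
    (hmdi : mdi G (2 * s) ≤ p * s + 1) :
    Nonempty (G ≃g spider' p (s + 1) (two_pos.trans_le hp) s.add_one_pos) := by
  obtain ⟨c, hdepth⟩ := exists_forall_dist_le hG hdiam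
  obtain ⟨D, hD⟩ := exists_isBranchTransversal G c (s + 1)
  obtain ⟨q, rfl⟩ := Nat.exists_eq_succ_of_ne_zero (two_pos.trans_le hp).ne'
  have hncard : D.ncard = q := by
    have hle := hD.card_le_mdi_add_ncard hG hdepth
    have hlt : D.ncard * (s + 1) < (q + 1) * (s + 1) :=
      hcard ▸ hD.ncard_mul_add_one_le hG.connected
    have := Nat.lt_of_mul_lt_mul_right hlt
    rw [hcard, Nat.mul_succ] at hle
    omega
  obtain ⟨y, hy, hbranch⟩ := hD.exists_branch_notMem hG hdepth
    (Set.nonempty_of_ncard_ne_zero (by omega)) (by rw [hcard, Nat.mul_succ]; omega)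
  exact hD.nonempty_iso_spider' hG hncard hy hbranch hcard

end Main

/-- Let `k ≥ 2` be even, `p ≥ 2`, and let `T` be a tree on
`n = p(k/2 + 1)` vertices of diameter at most `k + 2`. Then `mdi_k(T) ≥ f_k(n)` with
equality iff `T ≅ S'_{p,k/2+1}`. -/
theorem stmt_12 (k : ℕ) (hk : 2 ≤ k) (hke : Even k) (p : ℕ) (hp : 2 ≤ p)
    {V : Type} [Fintype V] (hn : Fintype.card V = p * (k / 2 + 1))
    (T : SimpleGraph V) (hT : T.IsTree) (hdiam : gdiam T ≤ k + 2) :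
    fk k (p * (k / 2 + 1)) ≤ mdi T k ∧
    (mdi T k = fk k (p * (k / 2 + 1)) ↔
      Nonempty (T ≃g spider' p (k / 2 + 1) (by omega) (by omega))) := by
  have hk2 : 2 * (k / 2) = k := Nat.two_mul_div_two_of_even hke
  have hcard : Nat.card V = p * (k / 2 + 1) := Nat.card_eq_fintype_card.trans hn
  have hdiam' : gdiam T ≤ 2 * (k / 2 + 1) := by omega
  have hfk := fk_two_mul_mul_add_one (s := k / 2) hp
  have hlower := mul_add_one_le_mdi (by omega) hT hdiam' hcard
  have hiso := nonempty_iso_spider'_of_mdi_le hp hT hdiam' hcard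
  have hupper := mdi_le_of_iso_spider' (G := T) (p := p) (s := k / 2) (by omega) (by omega)
  rw [hk2] at hfk hlower hiso hupper
  rw [hfk]
  exact ⟨hlower, fun h => hiso h.le, fun ⟨e⟩ => (hupper e).antisymm hlower⟩
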